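/- arXiv:2412.00261 — 6 statements merged into one kernel-verified Lean document; each statement's English description precedes it below -/
import Mathlib

section
/- Let n = k·s with k ≥ 1 blocks of size s ≥ 1, let J be the all-ones n×n matrix and B the block-diagonal matrix with k diagonal all-ones s×s blocks, and let A = q·J + (p−q)·B with p > q ≥ 0 and p > 0. Then every degree equals d = s·p + (k−1)·s·q, the transition matrix M = D⁻¹A = (1/d)A is row-stochastic, and for every t ≥ 1 its t-th power has the closed form M^t = c_t·J + s^{t−1}·((p−q)/d)^t·B, where c_t = (1 − s^t((p−q)/d)^t)/n. -/
open Matrix BigOperators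

/-- For the expected SBM adjacency matrix `A = q J + (p − q) B` on `n = k s`
nodes, every degree equals `d = s p + (k − 1) s q`, the transition matrix `M = D⁻¹ A = A / d`
is row-stochastic, and for every `t ≥ 1`,
`M^t = c_t J + s^(t−1) ((p − q)/d)^t B` with `c_t = (1 − s^t ((p − q)/d)^t) / n`. -/
theorem sbm_transition_power_closed_form (k s : ℕ) (hk : 1 ≤ k) (hs : 1 ≤ s)
    (p q : ℝ) (hq : 0 ≤ q) (hpq : q < p) (hp : 0 < p)
    (J B A : Matrix (Fin k × Fin s) (Fin k × Fin s) ℝ)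
    (hJ : J = Matrix.of fun _ _ => (1 : ℝ))
    (hB : B = Matrix.of fun u v => if u.1 = v.1 then (1 : ℝ) else 0)
    (hA : A = q • J + (p - q) • B)
    (dval : ℝ) (hd : dval = (s : ℝ) * p + ((k : ℝ) - 1) * (s : ℝ) * q)
    (D : Matrix (Fin k × Fin s) (Fin k × Fin s) ℝ) (hD : D = dval • 1)
    (M : Matrix (Fin k × Fin s) (Fin k × Fin s) ℝ) (hM : M = D⁻¹ * A) :
    (∀ u, ∑ v, A u v = dval) ∧
    M = dval⁻¹ • A ∧
    ((∀ u, ∑ v, M u v = 1) ∧ (∀ u v, 0 ≤ M u v)) ∧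
    (∀ t : ℕ, 1 ≤ t →
      M ^ t = ((1 - (s : ℝ) ^ t * ((p - q) / dval) ^ t) / ((k : ℝ) * (s : ℝ))) • J +
        ((s : ℝ) ^ (t - 1) * ((p - q) / dval) ^ t) • B) := by
  have hk' : (1 : ℝ) ≤ k := by exact_mod_cast hk
  have hs' : (1 : ℝ) ≤ s := by exact_mod_cast hs
  have hdpos : 0 < dval := by
    rw [hd]
    have h1 : 0 < (s : ℝ) * p := by positivity
    have h2 : 0 ≤ ((k : ℝ) - 1) * (s : ℝ) * q :=
      mul_nonneg (mul_nonneg (by linarith) (by linarith)) hq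
    linarith
  have hBrow : ∀ u, ∑ v, B u v = s := by
    intro u
    rw [Fintype.sum_prod_type, Finset.sum_comm]
    simp [hB]
  have hBcol : ∀ v, ∑ u, B u v = s := by
    intro u
    rw [Fintype.sum_prod_type, Finset.sum_comm]
    simp [hB]
  have hJJ : J * J = ((k : ℝ) * s) • J := by
    ext u v
    simp [hJ, Matrix.mul_apply]
  have hJB : J * B = (s : ℝ) • J := by
    ext u v
    have := hBcol v
    simp only [hJ, Matrix.mul_apply, Matrix.of_apply, Matrix.smul_apply, one_mul, this,
      smul_eq_mul, mul_one]
  have hBJ : B * J = (s : ℝ) • J := by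
    ext u v
    have := hBrow u
    simp only [hJ, Matrix.mul_apply, Matrix.of_apply, Matrix.smul_apply, mul_one, this,
      smul_eq_mul]
  have hBB : B * B = (s : ℝ) • B := by
    ext u v
    simp [hB, Matrix.mul_apply, Fintype.sum_prod_type]
    split_ifs <;> simp
  have hrow : ∀ u, ∑ v, A u v = dval := by
    intro u
    have hb := hBrow u
    simp only [hA, Matrix.add_apply, Matrix.smul_apply, smul_eq_mul, Finset.sum_add_distrib,
      ← Finset.mul_sum, hb]
    simp [hJ, hd]
    ring
  have hMA : M = dval⁻¹ • A := by
    have : D⁻¹ = dval⁻¹ • (1 : Matrix (Fin k × Fin s) (Fin k × Fin s) ℝ) := by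
      apply Matrix.inv_eq_left_inv
      rw [hD, smul_mul_smul_comm, inv_mul_cancel₀ hdpos.ne']
      simp
    rw [hM, this]
    simp
  refine ⟨hrow, hMA, ⟨?_, ?_⟩, ?_⟩
  · intro u
    simp only [hMA, Matrix.smul_apply, smul_eq_mul, ← Finset.mul_sum, hrow]
    exact inv_mul_cancel₀ hdpos.ne'
  · intro u v
    have h1 : 0 ≤ B u v := by
      simp only [hB, Matrix.of_apply]
      split_ifs <;> norm_num
    have h2 : 0 ≤ J u v := by simp [hJ]
    simp only [hMA, hA, Matrix.smul_apply, Matrix.add_apply, smul_eq_mul]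
    have h3 : 0 ≤ p - q := by linarith
    positivity
  · have hks : (k : ℝ) * s ≠ 0 := by positivity
    obtain ⟨r, hr⟩ : ∃ r, r = (p - q) / dval := ⟨_, rfl⟩
    have hqd : q / dval = (1 - s * r) / (k * s) := by
      rw [hr]
      field_simp
      rw [hd]
      ring
    have hM1 : M = ((1 - s * r) / (k * s)) • J + r • B := by
      rw [← hqd, hr, hMA, hA, smul_add, smul_smul, smul_smul]
      congr 2 <;> ring
    rw [← hr]
    intro t ht
    obtain ⟨m, rfl⟩ : ∃ m, t = m + 1 := ⟨t - 1, by omega⟩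
    clear ht
    simp only [Nat.add_sub_cancel]
    induction m with
    | zero => simpa using hM1
    | succ m ih =>
      rw [pow_succ, ih]
      nth_rewrite 1 [hM1]
      simp only [add_mul, mul_add, smul_mul_smul_comm, hJJ, hJB, hBJ, hBB, smul_smul]
      simp only [← add_assoc, ← add_smul]
      congr 2
      · field_simp
        ring
      · ring
end

section
/- (Lemma 1, expected-adjacency form.) Let A = q·J + (p−q)·B be the expected adjacency matrix of a Stochastic Block Model on n = k·s nodes with k ≥ 2 blocks of size s ≥ 1 and densities p > q ≥ 0, p > 0, and let R = (D/vol)(D⁻¹A)^t − d dᵀ/vol² be its Autocovariance matrix for any walk length t ≥ 1. Then for every intra-block pair (u,v) (u, v in the same block) and every inter-block pair (u′,v′) (u′, v′ in different blocks), R_{uv} > R_{u′v′}: the Autocovariance of intra-block pairs is strictly greater than that of inter-block pairs. -/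
open Matrix BigOperators

/-- Lemma 1, expected-adjacency form: For the expected SBM adjacency matrix
`A = q J + (p − q) B` on `n = k s` nodes (`k ≥ 2`, `p > q ≥ 0`, `p > 0`) and its Autocovariance
matrix `R = (D / vol)(D⁻¹ A)^t − d dᵀ / vol²` with walk length `t ≥ 1`, every intra-block pair
has a strictly greater Autocovariance score than every inter-block pair. -/
theorem sbm_autocovariance_intra_gt_inter (k s : ℕ) (hk : 2 ≤ k) (hs : 1 ≤ s)
    (p q : ℝ) (hq : 0 ≤ q) (hpq : q < p) (hp : 0 < p)
    (J B A : Matrix (Fin k × Fin s) (Fin k × Fin s) ℝ)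
    (hJ : J = Matrix.of fun _ _ => (1 : ℝ))
    (hB : B = Matrix.of fun u v => if u.1 = v.1 then (1 : ℝ) else 0)
    (hA : A = q • J + (p - q) • B)
    (dval : ℝ) (hd : dval = (s : ℝ) * p + ((k : ℝ) - 1) * (s : ℝ) * q)
    (D : Matrix (Fin k × Fin s) (Fin k × Fin s) ℝ) (hD : D = dval • 1)
    (vol : ℝ) (hvol : vol = ((k : ℝ) * (s : ℝ)) * dval)
    (t : ℕ) (ht : 1 ≤ t)
    (R : Matrix (Fin k × Fin s) (Fin k × Fin s) ℝ)
    (hR : R = vol⁻¹ • (D * (D⁻¹ * A) ^ t) -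
      (vol ^ 2)⁻¹ • Matrix.of (fun _ _ : Fin k × Fin s => dval * dval)) :
    ∀ u v u' v' : Fin k × Fin s, u.1 = v.1 → u'.1 ≠ v'.1 → R u' v' < R u v := by
  have hs0 : (0 : ℝ) < s := by exact_mod_cast hs
  have hk0 : (2 : ℝ) ≤ k := by exact_mod_cast hk
  have hd0 : 0 < dval := by
    rw [hd]
    have h1 : 0 < (s : ℝ) * p := mul_pos hs0 hp
    have h2 : 0 ≤ ((k : ℝ) - 1) * (s : ℝ) * q :=
      mul_nonneg (mul_nonneg (by linarith) hs0.le) hq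
    linarith
  have hv0 : 0 < vol := by
    rw [hvol]
    exact mul_pos (mul_pos (by linarith) hs0) hd0
  have hJJ : J * J = ((k : ℝ) * s) • J := by
    subst hJ
    ext u v
    simp [Matrix.mul_apply]
  have hJB : J * B = (s : ℝ) • J := by
    subst hJ hB
    ext u v
    simp only [Matrix.mul_apply, Fintype.sum_prod_type, Matrix.of_apply, Matrix.smul_apply]
    simp
  have hBJ : B * J = (s : ℝ) • J := by
    subst hJ hB
    ext u v
    simp only [Matrix.mul_apply, Fintype.sum_prod_type, Matrix.of_apply, Matrix.smul_apply]
    simp [apply_ite Finset.card]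
  have hBB : B * B = (s : ℝ) • B := by
    subst hB
    ext u v
    simp only [Matrix.mul_apply, Fintype.sum_prod_type, Matrix.of_apply, Matrix.smul_apply]
    by_cases huv : u.1 = v.1 <;> simp [huv]
  have key : ∀ m : ℕ, ∃ a b : ℝ, 0 < b ∧ A ^ (m + 1) = a • J + b • B := by
    intro m
    induction m with
    | zero => exact ⟨q, p - q, by linarith, by simp [hA]⟩
    | succ m ih =>
      obtain ⟨a, b, hb, h⟩ := ih
      refine ⟨a * q * (k * s) + a * (p - q) * s + b * q * s, b * (p - q) * s,
        mul_pos (mul_pos hb (by linarith)) hs0, ?_⟩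
      rw [pow_succ, h, hA]
      simp only [add_mul, mul_add, smul_mul_assoc, mul_smul_comm, hJJ, hJB, hBJ, hBB]
      module
  obtain ⟨m, rfl⟩ : ∃ m, t = m + 1 := ⟨t - 1, by omega⟩
  obtain ⟨a, b, hb, h⟩ := key m
  have hDi : D⁻¹ = dval⁻¹ • 1 := by
    apply Matrix.inv_eq_right_inv
    rw [hD]
    simp [smul_smul, hd0.ne']
  intro u v u' v' huv huv'
  rw [hR, hDi, hD, smul_mul_assoc, smul_mul_assoc, one_mul, one_mul, smul_pow, h, hJ, hB]
  simp only [Matrix.sub_apply, Matrix.smul_apply, Matrix.add_apply, Matrix.of_apply, smul_eq_mul,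
    if_pos huv, if_neg huv']
  gcongr
  exact one_pos
end

section
/- Let A = q·J + (p−q)·B be the expected adjacency matrix of a Stochastic Block Model on n = k·s nodes with k ≥ 2 blocks of size s ≥ 1 and p > q ≥ 0, p > 0, and let R be its Autocovariance matrix with walk length t ≥ 1. Then the gap between the (constant) intra-block Autocovariance value R_intra and the (constant) inter-block value R_inter equals R_intra − R_inter = (1/n)·s^{t−1}·((p−q)/d)^t, where d = s·p + (k−1)·s·q; in particular the gap is strictly positive. -/
open Matrix BigOperators

/-- For the expected SBM adjacency matrix and its Autocovariance matrix at walk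
length `t ≥ 1`, the gap between the intra-block value and the inter-block value equals
`(1/n) * s^(t−1) * ((p − q)/d)^t` with `d = s p + (k − 1) s q`; in particular the gap is
strictly positive. -/
theorem sbm_autocovariance_gap (k s : ℕ) (hk : 2 ≤ k) (hs : 1 ≤ s)
    (p q : ℝ) (hq : 0 ≤ q) (hpq : q < p) (hp : 0 < p)
    (J B A : Matrix (Fin k × Fin s) (Fin k × Fin s) ℝ)
    (hJ : J = Matrix.of fun _ _ => (1 : ℝ))
    (hB : B = Matrix.of fun u v => if u.1 = v.1 then (1 : ℝ) else 0)
    (hA : A = q • J + (p - q) • B)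
    (dval : ℝ) (hd : dval = (s : ℝ) * p + ((k : ℝ) - 1) * (s : ℝ) * q)
    (D : Matrix (Fin k × Fin s) (Fin k × Fin s) ℝ) (hD : D = dval • 1)
    (vol : ℝ) (hvol : vol = ((k : ℝ) * (s : ℝ)) * dval)
    (t : ℕ) (ht : 1 ≤ t)
    (R : Matrix (Fin k × Fin s) (Fin k × Fin s) ℝ)
    (hR : R = vol⁻¹ • (D * (D⁻¹ * A) ^ t) -
      (vol ^ 2)⁻¹ • Matrix.of (fun _ _ : Fin k × Fin s => dval * dval)) :
    (∀ u v u' v' : Fin k × Fin s, u.1 = v.1 → u'.1 ≠ v'.1 →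
      R u v - R u' v' =
        (1 / ((k : ℝ) * (s : ℝ))) * (s : ℝ) ^ (t - 1) * ((p - q) / dval) ^ t) ∧
    0 < (1 / ((k : ℝ) * (s : ℝ))) * (s : ℝ) ^ (t - 1) * ((p - q) / dval) ^ t := by
  have hs0 : (0 : ℝ) < s := by exact_mod_cast hs
  have hk2 : (2 : ℝ) ≤ k := by exact_mod_cast hk
  have hd0 : 0 < dval := by
    rw [hd]
    have h1 : 0 < (s : ℝ) * p := mul_pos hs0 hp
    have h2 : 0 ≤ ((k : ℝ) - 1) * (s : ℝ) * q :=
      mul_nonneg (mul_nonneg (by linarith) hs0.le) hq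
    linarith
  have hk0 : (0 : ℝ) < k := by linarith
  have hpq0 : 0 < p - q := by linarith
  refine ⟨?_, by positivity⟩
  have hJJ : J * J = ((k : ℝ) * s) • J := by
    ext u v
    simp [hJ, Matrix.mul_apply]
  have hJB : J * B = (s : ℝ) • J := by
    ext u v
    simp only [hJ, hB, Matrix.mul_apply, Fintype.sum_prod_type, Matrix.of_apply, Matrix.smul_apply]
    rw [Finset.sum_comm]
    simp
  have hBJ : B * J = (s : ℝ) • J := by
    ext u v
    simp only [hJ, hB, Matrix.mul_apply, Fintype.sum_prod_type, Matrix.of_apply, Matrix.smul_apply]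
    rw [Finset.sum_comm]
    simp
  have hBB : B * B = (s : ℝ) • B := by
    ext u v
    simp only [hB, Matrix.mul_apply, Fintype.sum_prod_type, Matrix.of_apply, Matrix.smul_apply]
    rw [Finset.sum_comm]
    by_cases h : u.1 = v.1 <;> simp [h]
  have hDinv : D⁻¹ = dval⁻¹ • 1 := by
    apply Matrix.inv_eq_right_inv
    rw [hD]
    simp [smul_smul, hd0.ne']
  have hM : D⁻¹ * A = (q / dval) • J + ((p - q) / dval) • B := by
    rw [hDinv, hA]
    simp only [smul_mul_assoc, one_mul, smul_add, smul_smul]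
    congr 2 <;> ring
  have key : ∀ m : ℕ, ∃ c : ℝ, (D⁻¹ * A) ^ (m + 1) =
      c • J + ((s : ℝ) ^ m * ((p - q) / dval) ^ (m + 1)) • B := by
    intro m
    induction m with
    | zero => exact ⟨q / dval, by simp [hM]⟩
    | succ m ih =>
      obtain ⟨c, hc⟩ := ih
      refine ⟨c * (q / dval) * (k * s) + c * ((p - q) / dval) * s +
        ((s : ℝ) ^ m * ((p - q) / dval) ^ (m + 1)) * (q / dval) * s, ?_⟩
      rw [pow_succ, hc, hM]
      simp only [add_mul, mul_add, smul_mul_assoc, mul_smul_comm, hJJ, hJB, hBJ, hBB, smul_smul]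
      module
  obtain ⟨m, rfl⟩ : ∃ m, t = m + 1 := ⟨t - 1, by omega⟩
  obtain ⟨c, hc⟩ := key m
  intro u v u' v' h h'
  rw [hR, hc, hD, hvol, hJ, hB]
  simp [h, h']
  field_simp
  try ring
end

section
/- Let A = q·J + (p−q)·B be the expected adjacency matrix of a Stochastic Block Model on n = k·s nodes with k ≥ 2 blocks of size s ≥ 1 and p > q ≥ 0, p > 0, and let R be its Autocovariance matrix with walk length t ≥ 1. Writing e_t = s^{t−1}·((p−q)/d)^t with d = s·p + (k−1)·s·q, the Autocovariance values are exactly R_intra = (1 − 1/k)·e_t/n on intra-block pairs and R_inter = −e_t/(k·n) on inter-block pairs. -/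
open Matrix BigOperators

/-- Writing `e_t = s^(t−1) ((p − q)/d)^t` with `d = s p + (k − 1) s q`, the
Autocovariance values of the expected SBM at walk length `t ≥ 1` are exactly
`R_intra = (1 − 1/k) e_t / n` on intra-block pairs and `R_inter = −e_t / (k n)` on
inter-block pairs. -/
theorem sbm_autocovariance_values (k s : ℕ) (hk : 2 ≤ k) (hs : 1 ≤ s)
    (p q : ℝ) (hq : 0 ≤ q) (hpq : q < p) (hp : 0 < p)
    (J B A : Matrix (Fin k × Fin s) (Fin k × Fin s) ℝ)
    (hJ : J = Matrix.of fun _ _ => (1 : ℝ))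
    (hB : B = Matrix.of fun u v => if u.1 = v.1 then (1 : ℝ) else 0)
    (hA : A = q • J + (p - q) • B)
    (dval : ℝ) (hd : dval = (s : ℝ) * p + ((k : ℝ) - 1) * (s : ℝ) * q)
    (D : Matrix (Fin k × Fin s) (Fin k × Fin s) ℝ) (hD : D = dval • 1)
    (vol : ℝ) (hvol : vol = ((k : ℝ) * (s : ℝ)) * dval)
    (t : ℕ) (ht : 1 ≤ t)
    (R : Matrix (Fin k × Fin s) (Fin k × Fin s) ℝ)
    (hR : R = vol⁻¹ • (D * (D⁻¹ * A) ^ t) -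
      (vol ^ 2)⁻¹ • Matrix.of (fun _ _ : Fin k × Fin s => dval * dval)) :
    (∀ u v : Fin k × Fin s, u.1 = v.1 →
      R u v = (1 - 1 / (k : ℝ)) * ((s : ℝ) ^ (t - 1) * ((p - q) / dval) ^ t) /
        ((k : ℝ) * (s : ℝ))) ∧
    (∀ u v : Fin k × Fin s, u.1 ≠ v.1 →
      R u v = -((s : ℝ) ^ (t - 1) * ((p - q) / dval) ^ t) /
        ((k : ℝ) * ((k : ℝ) * (s : ℝ)))) := by
  have hs0 : (0 : ℝ) < s := by exact_mod_cast hs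
  have hk1 : (2 : ℝ) ≤ k := by exact_mod_cast hk
  have hk0 : (0 : ℝ) < k := by linarith
  have hd0 : 0 < dval := by
    have h1 : 0 < (s : ℝ) * p := mul_pos hs0 hp
    have h2 : 0 ≤ ((k : ℝ) - 1) * (s : ℝ) * q :=
      mul_nonneg (mul_nonneg (by linarith) hs0.le) hq
    linarith
  have hJJ : J * J = ((k : ℝ) * s) • J := by
    subst hJ; ext u v
    simp [Matrix.mul_apply]
  have hJB : J * B = (s : ℝ) • J := by
    subst hJ hB; ext u v
    simp only [Matrix.mul_apply, Fintype.sum_prod_type, Matrix.of_apply, Matrix.smul_apply]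
    rw [Finset.sum_comm]
    simp
  have hBJ : B * J = (s : ℝ) • J := by
    subst hJ hB; ext u v
    simp only [Matrix.mul_apply, Fintype.sum_prod_type, Matrix.of_apply, Matrix.smul_apply]
    rw [Finset.sum_comm]
    simp
  have hBB : B * B = (s : ℝ) • B := by
    subst hB; ext u v
    simp [Matrix.mul_apply, Fintype.sum_prod_type]
    split_ifs <;> simp
  have hDi : D⁻¹ = dval⁻¹ • 1 := by
    apply Matrix.inv_eq_right_inv
    rw [hD]
    simp [smul_smul, hd0.ne']
  obtain ⟨c, hc⟩ : ∃ c, c = (p - q) / dval := ⟨_, rfl⟩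
  obtain ⟨a, ha⟩ : ∃ a, a = q / dval := ⟨_, rfl⟩
  have hM : D⁻¹ * A = a • J + c • B := by
    rw [hDi, hA, hc, ha, Matrix.smul_mul, Matrix.one_mul, smul_add, smul_smul, smul_smul]
    congr 2 <;> ring
  have hac : a * (k * s) + c * s = 1 := by
    rw [ha, hc]; field_simp; rw [hd]; ring
  have hpow : ∀ m : ℕ, (D⁻¹ * A) ^ (m + 1) =
      (1 / ((k : ℝ) * s) - (s : ℝ) ^ m * c ^ (m + 1) / k) • J
        + ((s : ℝ) ^ m * c ^ (m + 1)) • B := by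
    intro m
    induction m with
    | zero =>
      rw [zero_add, pow_one, hM]
      congr 2
      · field_simp; linarith
      · simp
    | succ m ih =>
      rw [pow_succ, ih, hM]
      obtain ⟨E, hE⟩ : ∃ E, E = (s : ℝ) ^ m * c ^ (m + 1) := ⟨_, rfl⟩
      have hE2 : (s : ℝ) ^ (m + 1) * c ^ (m + 1 + 1) = E * (c * s) := by rw [hE]; ring
      rw [hE2, ← hE]
      simp only [add_mul, mul_add, Matrix.smul_mul, Matrix.mul_smul, hJJ, hJB, hBJ, hBB, smul_smul]
      have hcs : c * s = 1 - a * (k * s) := by linarith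
      have key : 1 / ((k : ℝ) * s) - E * (c * s) / k =
          (1 / ((k : ℝ) * s) - E / k) * (a * (k * s) + c * s) + E * (a * s) := by
        rw [hac, hcs]; field_simp; ring
      rw [key]
      module
  obtain ⟨m, rfl⟩ : ∃ m, t = m + 1 := ⟨t - 1, by omega⟩
  have hRe : ∀ u v, R u v = ((s : ℝ) ^ m * c ^ (m + 1)) / (k * s) *
      ((if u.1 = v.1 then 1 else 0) - 1 / k) := by
    intro u v
    rw [hR, hpow, hD, hJ, hB, hvol]
    simp only [Matrix.smul_mul, Matrix.one_mul, Matrix.sub_apply, Matrix.smul_apply,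
      Matrix.add_apply, Matrix.of_apply, smul_eq_mul]
    generalize (s : ℝ) ^ m * c ^ (m + 1) = E
    generalize (if u.1 = v.1 then (1 : ℝ) else 0) = b
    field_simp
    ring
  rw [← hc, Nat.add_sub_cancel]
  refine ⟨fun u v h => ?_, fun u v h => ?_⟩
  · rw [hRe, if_pos h]; ring
  · rw [hRe, if_neg h]; field_simp; ring
end

section
/- Let A = q·J + (p−q)·B be the expected adjacency matrix of a Stochastic Block Model on n = k·s nodes with k ≥ 2 blocks of size s ≥ 1 and p > q ≥ 0, p > 0, and let R be its Autocovariance matrix with walk length t ≥ 1. Then R_intra > 0 > R_inter: every intra-block pair has strictly positive Autocovariance and every inter-block pair has strictly negative Autocovariance. -/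
open Matrix BigOperators

/-- For the expected SBM adjacency matrix and its Autocovariance matrix at walk
length `t ≥ 1`, every intra-block pair has a strictly positive Autocovariance score and every
inter-block pair has a strictly negative Autocovariance score: `R_intra > 0 > R_inter`. -/
theorem sbm_autocovariance_signs (k s : ℕ) (hk : 2 ≤ k) (hs : 1 ≤ s)
    (p q : ℝ) (hq : 0 ≤ q) (hpq : q < p) (hp : 0 < p)
    (J B A : Matrix (Fin k × Fin s) (Fin k × Fin s) ℝ)
    (hJ : J = Matrix.of fun _ _ => (1 : ℝ))
    (hB : B = Matrix.of fun u v => if u.1 = v.1 then (1 : ℝ) else 0)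
    (hA : A = q • J + (p - q) • B)
    (dval : ℝ) (hd : dval = (s : ℝ) * p + ((k : ℝ) - 1) * (s : ℝ) * q)
    (D : Matrix (Fin k × Fin s) (Fin k × Fin s) ℝ) (hD : D = dval • 1)
    (vol : ℝ) (hvol : vol = ((k : ℝ) * (s : ℝ)) * dval)
    (t : ℕ) (ht : 1 ≤ t)
    (R : Matrix (Fin k × Fin s) (Fin k × Fin s) ℝ)
    (hR : R = vol⁻¹ • (D * (D⁻¹ * A) ^ t) -
      (vol ^ 2)⁻¹ • Matrix.of (fun _ _ : Fin k × Fin s => dval * dval)) :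
    (∀ u v : Fin k × Fin s, u.1 = v.1 → 0 < R u v) ∧
    (∀ u v : Fin k × Fin s, u.1 ≠ v.1 → R u v < 0) := by
  have hk0 : (2:ℝ) ≤ k := by exact_mod_cast hk
  have hs0 : (0:ℝ) < s := by exact_mod_cast hs
  have hkp : (0:ℝ) < k := by linarith
  have hdpos : 0 < dval := by
    rw [hd]
    have h1 : 0 < (s:ℝ) * p := mul_pos hs0 hp
    have h2 : 0 ≤ ((k : ℝ) - 1) * (s : ℝ) * q :=
      mul_nonneg (mul_nonneg (by linarith) hs0.le) hq
    linarith
  have hJJ : J * J = ((k:ℝ) * s) • J := by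
    ext u v
    simp [hJ, Matrix.mul_apply]
  have hJB : J * B = (s:ℝ) • J := by
    ext u v
    simp [hJ, hB, Matrix.mul_apply, Fintype.sum_prod_type, -Finset.sum_boole]
    rw [Finset.sum_comm]
    simp [Finset.sum_ite_eq, -Finset.sum_boole]
  have hBJ : B * J = (s:ℝ) • J := by
    ext u v
    simp [hJ, hB, Matrix.mul_apply, Fintype.sum_prod_type, -Finset.sum_boole]
    rw [Finset.sum_comm]
    simp [Finset.sum_ite_eq, -Finset.sum_boole]
  have hBB : B * B = (s:ℝ) • B := by
    ext u v
    simp [hB, Matrix.mul_apply, Fintype.sum_prod_type]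
    split_ifs <;> simp
  have hDinv : D⁻¹ = dval⁻¹ • 1 := by
    apply Matrix.inv_eq_right_inv
    rw [hD]
    simp [smul_smul, hdpos.ne']
  obtain ⟨l, hl⟩ : ∃ l : ℝ, l = s * (p - q) / dval := ⟨_, rfl⟩
  have hlpos : 0 < l := by
    rw [hl]; exact div_pos (mul_pos hs0 (by linarith)) hdpos
  have hM : D⁻¹ * A = ((1 - l) / (k * s)) • J + (l / s) • B := by
    rw [hDinv, hA, smul_mul_assoc, one_mul, smul_add, smul_smul, smul_smul]
    congr 2
    · rw [hl]; field_simp; rw [hd]; ring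
    · rw [hl]; field_simp
  have hpow : ∀ m : ℕ, (D⁻¹ * A) ^ (m + 1) =
      ((1 - l ^ (m + 1)) / (k * s)) • J + (l ^ (m + 1) / s) • B := by
    intro m
    induction m with
    | zero => simpa using hM
    | succ m ih =>
      rw [pow_succ, ih, hM]
      simp only [add_mul, mul_add, smul_mul_assoc, mul_smul_comm, hJJ, hJB, hBJ, hBB]
      match_scalars
      · field_simp; ring
      · field_simp; ring
  obtain ⟨m, rfl⟩ : ∃ m, t = m + 1 := ⟨t - 1, by omega⟩
  have hLpos : 0 < l ^ (m + 1) := pow_pos hlpos _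
  have hent : ∀ u v, R u v = l ^ (m + 1) / (k * s) ^ 2 * (k * B u v - 1) := by
    intro u v
    rw [hR, hpow, hD, hvol, hJ]
    simp only [smul_mul_assoc, one_mul, Matrix.sub_apply, Matrix.smul_apply, Matrix.add_apply,
      Matrix.of_apply, smul_eq_mul]
    field_simp
    ring
  have hc : 0 < l ^ (m + 1) / ((k:ℝ) * s) ^ 2 := by positivity
  constructor
  · intro u v h
    rw [hent]
    apply mul_pos hc
    simp [hB, h]
    linarith
  · intro u v h
    rw [hent]
    apply mul_neg_of_pos_of_neg hc
    simp [hB, h]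
end

section
/- (Lemma 2, t = 1 case, expected-adjacency form.) Fix n ∈ ℕ and densities p > q ≥ 0 with p > 0. For each divisor k of n, consider the Stochastic Block Model expected adjacency matrix on n nodes with k equal blocks of size s = n/k, and let R_intra(k) be the common Autocovariance value of intra-block pairs at walk length t = 1. Then R_intra(k) = (p − q)(k − 1) / (n²·(k·q + p − q)), and R_intra is strictly monotonically increasing in the number of blocks: for divisors k₁ < k₂ of n (with k₁ ≥ 1), R_intra(k₁) < R_intra(k₂). -/
open Matrix BigOperators

theorem sbm_aux (n : ℕ) (hn : 0 < n)
    (p q : ℝ) (hq : 0 ≤ q) (hpq : q < p)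
    (k : ℕ) (hk : 1 ≤ k) (hdvd : k ∣ n) (s : ℕ) (hs : s = n / k)
    (A : Matrix (Fin k × Fin s) (Fin k × Fin s) ℝ)
    (hA : A = q • (Matrix.of fun _ _ => (1 : ℝ)) +
      (p - q) • (Matrix.of fun u v => if u.1 = v.1 then (1 : ℝ) else 0))
    (d : ℝ) (hd : d = (s : ℝ) * p + ((k : ℝ) - 1) * (s : ℝ) * q)
    (D : Matrix (Fin k × Fin s) (Fin k × Fin s) ℝ) (hD : D = d • 1)
    (vol : ℝ) (hvol : vol = (n : ℝ) * d)
    (R : Matrix (Fin k × Fin s) (Fin k × Fin s) ℝ)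
    (hR : R = vol⁻¹ • (D * (D⁻¹ * A) ^ 1) -
      (vol ^ 2)⁻¹ • Matrix.of (fun _ _ : Fin k × Fin s => d * d))
    (u v : Fin k × Fin s) (huv : u.1 = v.1) :
    R u v = (p - q) * ((k : ℝ) - 1) / ((n : ℝ) ^ 2 * ((k : ℝ) * q + p - q)) := by
  have hnks : n = k * s := by rw [hs]; exact (Nat.mul_div_cancel' hdvd).symm
  have hs0 : 0 < s := by
    rcases Nat.eq_zero_or_pos s with h | h
    · subst h; omega
    · exact h
  have hsR : (0 : ℝ) < s := by exact_mod_cast hs0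
  have hkR : (1 : ℝ) ≤ k := by exact_mod_cast hk
  have hc : 0 < (k : ℝ) * q + p - q := by nlinarith
  have hd' : d = s * ((k : ℝ) * q + p - q) := by rw [hd]; ring
  have hd0 : d ≠ 0 := by rw [hd']; positivity
  have hdet : IsUnit D.det := by
    rw [hD, Matrix.det_smul, Matrix.det_one, mul_one]
    exact (pow_ne_zero _ hd0).isUnit
  have hn' : (n : ℝ) = k * s := by exact_mod_cast hnks
  have hk0 : (k : ℝ) ≠ 0 := by positivity
  rw [hR, pow_one, Matrix.mul_nonsing_inv_cancel_left _ _ hdet, hA]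
  simp only [Matrix.sub_apply, Matrix.smul_apply, Matrix.add_apply, Matrix.of_apply, huv,
    if_true, smul_eq_mul, mul_one]
  rw [hvol, hn', hd']
  generalize hcc : (k : ℝ) * q + p - q = c at *
  have hcne := hc.ne'
  have hsne := hsR.ne'
  field_simp
  rw [← hcc]
  ring

/-- Lemma 2, t = 1 case, expected-adjacency form: Fix `n` and densities
`p > q ≥ 0`, `p > 0`. For each divisor `k` of `n`, the SBM expected adjacency matrix on `n`
nodes with `k` equal blocks of size `s = n / k` has intra-block Autocovariance value at walk
length `t = 1` equal to `(p − q)(k − 1) / (n² (k q + p − q))`, and this value strictly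
increases with the number of blocks: for divisors `k₁ < k₂` of `n` (with `k₁ ≥ 1`), the
intra-block value for `k₁` blocks is strictly smaller than the one for `k₂` blocks. -/
theorem sbm_intra_autocovariance_increasing_in_blocks (n : ℕ) (hn : 0 < n)
    (p q : ℝ) (hq : 0 ≤ q) (hpq : q < p) (hp : 0 < p)
    (k₁ k₂ : ℕ) (hk₁ : 1 ≤ k₁) (hk₁₂ : k₁ < k₂) (hdvd₁ : k₁ ∣ n) (hdvd₂ : k₂ ∣ n)
    (s₁ s₂ : ℕ) (hs₁ : s₁ = n / k₁) (hs₂ : s₂ = n / k₂)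
    (A₁ : Matrix (Fin k₁ × Fin s₁) (Fin k₁ × Fin s₁) ℝ)
    (hA₁ : A₁ = q • (Matrix.of fun _ _ => (1 : ℝ)) +
      (p - q) • (Matrix.of fun u v => if u.1 = v.1 then (1 : ℝ) else 0))
    (A₂ : Matrix (Fin k₂ × Fin s₂) (Fin k₂ × Fin s₂) ℝ)
    (hA₂ : A₂ = q • (Matrix.of fun _ _ => (1 : ℝ)) +
      (p - q) • (Matrix.of fun u v => if u.1 = v.1 then (1 : ℝ) else 0))
    (d₁ d₂ : ℝ)
    (hd₁ : d₁ = (s₁ : ℝ) * p + ((k₁ : ℝ) - 1) * (s₁ : ℝ) * q)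
    (hd₂ : d₂ = (s₂ : ℝ) * p + ((k₂ : ℝ) - 1) * (s₂ : ℝ) * q)
    (D₁ : Matrix (Fin k₁ × Fin s₁) (Fin k₁ × Fin s₁) ℝ) (hD₁ : D₁ = d₁ • 1)
    (D₂ : Matrix (Fin k₂ × Fin s₂) (Fin k₂ × Fin s₂) ℝ) (hD₂ : D₂ = d₂ • 1)
    (vol₁ vol₂ : ℝ) (hvol₁ : vol₁ = (n : ℝ) * d₁) (hvol₂ : vol₂ = (n : ℝ) * d₂)
    (R₁ : Matrix (Fin k₁ × Fin s₁) (Fin k₁ × Fin s₁) ℝ)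
    (hR₁ : R₁ = vol₁⁻¹ • (D₁ * (D₁⁻¹ * A₁) ^ 1) -
      (vol₁ ^ 2)⁻¹ • Matrix.of (fun _ _ : Fin k₁ × Fin s₁ => d₁ * d₁))
    (R₂ : Matrix (Fin k₂ × Fin s₂) (Fin k₂ × Fin s₂) ℝ)
    (hR₂ : R₂ = vol₂⁻¹ • (D₂ * (D₂⁻¹ * A₂) ^ 1) -
      (vol₂ ^ 2)⁻¹ • Matrix.of (fun _ _ : Fin k₂ × Fin s₂ => d₂ * d₂)) :
    (∀ u v : Fin k₁ × Fin s₁, u.1 = v.1 →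
      R₁ u v = (p - q) * ((k₁ : ℝ) - 1) / ((n : ℝ) ^ 2 * ((k₁ : ℝ) * q + p - q))) ∧
    (∀ u v : Fin k₂ × Fin s₂, u.1 = v.1 →
      R₂ u v = (p - q) * ((k₂ : ℝ) - 1) / ((n : ℝ) ^ 2 * ((k₂ : ℝ) * q + p - q))) ∧
    (∀ (u v : Fin k₁ × Fin s₁) (u' v' : Fin k₂ × Fin s₂),
      u.1 = v.1 → u'.1 = v'.1 → R₁ u v < R₂ u' v') := by
  have h1 := sbm_aux n hn p q hq hpq k₁ hk₁ hdvd₁ s₁ hs₁ A₁ hA₁ d₁ hd₁ D₁ hD₁ vol₁ hvol₁ R₁ hR₁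
  have h2 := sbm_aux n hn p q hq hpq k₂ (by omega) hdvd₂ s₂ hs₂ A₂ hA₂ d₂ hd₂ D₂ hD₂
    vol₂ hvol₂ R₂ hR₂
  refine ⟨h1, h2, ?_⟩
  intro u v u' v' huv huv'
  rw [h1 u v huv, h2 u' v' huv']
  have hnR : (0 : ℝ) < n := by exact_mod_cast hn
  have hk1 : (1 : ℝ) ≤ k₁ := by exact_mod_cast hk₁
  have hk12 : (k₁ : ℝ) < k₂ := by exact_mod_cast hk₁₂
  have hc1 : 0 < (k₁ : ℝ) * q + p - q := by nlinarith
  have hc2 : 0 < (k₂ : ℝ) * q + p - q := by nlinarith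
  rw [div_lt_div_iff₀ (by positivity) (by positivity), ← sub_pos]
  have : 0 < (p - q) * (n : ℝ) ^ 2 * (((k₂ : ℝ) - k₁) * p) :=
    mul_pos (mul_pos (sub_pos.2 hpq) (by positivity)) (mul_pos (sub_pos.2 hk12) hp)
  calc 0 < _ := this
    _ = _ := by ring
end
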